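/- There exists a constant C > 0 depending only on Ω, a, b and c such that for every number of elements N and every equidistributing mesh (equidistributing the adaptation function ρ computed from its own finite element solution u_h), the linear finite element error satisfies ‖(u − u_h)'‖_Ω ≤ C √α_h / N. -/

import Mathlib

/-!
Setting of Huang–He, "Error analysis for equidistributing meshes":
the boundary value problem  −(a u')' + b u' + c u = f on Ω = (0,1), u(0)=u(1)=0,
its linear finite element discretization on a mesh 0 = x₀ < ⋯ < x_N = 1,
and the residual-based equidistribution quantities.
-/

noncomputable section
open MeasureTheory Real

namespace EquidMesh

/-- L² norm on (0,1). -/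
def L2 (g : ℝ → ℝ) : ℝ := Real.sqrt (∫ t in (0:ℝ)..1, (g t)^2)

/-- L¹ norm on (0,1). -/
def L1 (g : ℝ → ℝ) : ℝ := ∫ t in (0:ℝ)..1, |g t|

/-- The L^{2/3} quasi-norm on (0,1): (∫₀¹ |g|^{2/3})^{3/2}. -/
def Lp23 (g : ℝ → ℝ) : ℝ := (∫ t in (0:ℝ)..1, |g t| ^ ((2:ℝ)/3)) ^ ((3:ℝ)/2)

/-- L^∞ norm (essential supremum of |g|) on (0,1). -/
def Linf (g : ℝ → ℝ) : ℝ := essSup (fun t => |g t|) (volume.restrict (Set.Ioo (0:ℝ) 1))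

/-- Membership in L²(0,1). -/
def MemL2 (g : ℝ → ℝ) : Prop :=
  Measurable g ∧ IntervalIntegrable (fun t => (g t)^2) volume 0 1

/-- Membership in L^∞(0,1). -/
def MemLinf (g : ℝ → ℝ) : Prop :=
  Measurable g ∧ ∃ M : ℝ, ∀ᵐ x ∂(volume.restrict (Set.Ioo (0:ℝ) 1)), |g x| ≤ M

/-- `g` is absolutely continuous on [0,1] with derivative `g' ∈ L¹(0,1)`. -/
def HasL1Deriv (g g' : ℝ → ℝ) : Prop :=
  Measurable g' ∧ IntervalIntegrable g' volume 0 1 ∧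
    ∀ x ∈ Set.Icc (0:ℝ) 1, g x = g 0 + ∫ t in (0:ℝ)..x, g' t

/-- A function in H¹(0,1): absolutely continuous on [0,1], carried together with its
(a.e.) derivative, which lies in L²(0,1). -/
structure H1 where
  val : ℝ → ℝ
  dval : ℝ → ℝ
  dval_meas : Measurable dval
  dval_int : IntervalIntegrable dval volume 0 1
  dval_sq_int : IntervalIntegrable (fun t => (dval t)^2) volume 0 1
  ftc : ∀ x ∈ Set.Icc (0:ℝ) 1, val x = val 0 + ∫ t in (0:ℝ)..x, dval t

/-- `u ∈ H²(0,1)`: the derivative `u'` is absolutely continuous with `u'' ∈ L²(0,1)`. -/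
def H1.IsH2 (u : H1) : Prop :=
  ∃ u'' : ℝ → ℝ, Measurable u'' ∧ IntervalIntegrable u'' volume 0 1 ∧
    IntervalIntegrable (fun t => (u'' t)^2) volume 0 1 ∧
    ∀ x ∈ Set.Icc (0:ℝ) 1, u.dval x = u.dval 0 + ∫ t in (0:ℝ)..x, u'' t

/-- The coefficients of the elliptic problem on Ω = (0,1):
`a, b ∈ W^{1,∞}(Ω)`, `c ∈ L^∞(Ω)`, `a ≥ a₀ > 0`, and `c − b'/2 ≥ 0` a.e. -/
structure Coeffs where
  a : ℝ → ℝ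
  b : ℝ → ℝ
  c : ℝ → ℝ
  a' : ℝ → ℝ
  b' : ℝ → ℝ
  a0 : ℝ
  a0_pos : 0 < a0
  a_lb : ∀ x ∈ Set.Icc (0:ℝ) 1, a0 ≤ a x
  a'_meas : Measurable a'
  b'_meas : Measurable b'
  c_meas : Measurable c
  a'_int : IntervalIntegrable a' volume 0 1
  b'_int : IntervalIntegrable b' volume 0 1
  a'_bdd : ∃ M : ℝ, ∀ᵐ x ∂(volume.restrict (Set.Ioo (0:ℝ) 1)), |a' x| ≤ M
  b'_bdd : ∃ M : ℝ, ∀ᵐ x ∂(volume.restrict (Set.Ioo (0:ℝ) 1)), |b' x| ≤ M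
  c_bdd : ∃ M : ℝ, ∀ᵐ x ∂(volume.restrict (Set.Ioo (0:ℝ) 1)), |c x| ≤ M
  ftc_a : ∀ x ∈ Set.Icc (0:ℝ) 1, a x = a 0 + ∫ t in (0:ℝ)..x, a' t
  ftc_b : ∀ x ∈ Set.Icc (0:ℝ) 1, b x = b 0 + ∫ t in (0:ℝ)..x, b' t
  cb_nonneg : ∀ᵐ x ∂(volume.restrict (Set.Ioo (0:ℝ) 1)), 0 ≤ c x - b' x / 2

/-- The bilinear form B(u,v) = ∫₀¹ (a u' v' + b u' v + c u v) dx. -/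
def Coeffs.B (P : Coeffs) (u v : H1) : ℝ :=
  ∫ t in (0:ℝ)..1,
    (P.a t * u.dval t * v.dval t + P.b t * u.dval t * v.val t + P.c t * u.val t * v.val t)

/-- The right-hand side functional (f, v) = ∫₀¹ f v dx. -/
def ip (f : ℝ → ℝ) (v : H1) : ℝ := ∫ t in (0:ℝ)..1, f t * v.val t

/-- `u ∈ H¹₀(Ω)` is the weak solution: B(u,v) = (f,v) for all v ∈ H¹₀(Ω). -/
def Coeffs.IsWeakSolution (P : Coeffs) (f : ℝ → ℝ) (u : H1) : Prop :=
  u.val 0 = 0 ∧ u.val 1 = 0 ∧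
    ∀ v : H1, v.val 0 = 0 → v.val 1 = 0 → P.B u v = ip f v

/-- A mesh of N elements of Ω = (0,1): 0 = x₀ < x₁ < ⋯ < x_N = 1. -/
structure Mesh (N : ℕ) where
  x : ℕ → ℝ
  x_zero : x 0 = 0
  x_last : x N = 1
  x_mono : ∀ i < N, x i < x (i+1)

/-- Element length (the element of index `i` is `(x i, x (i+1))`, `0 ≤ i < N`). -/
def Mesh.h {N : ℕ} (m : Mesh N) (i : ℕ) : ℝ := m.x (i+1) - m.x i

/-- `v` is piecewise linear with respect to the mesh: its derivative is constant
inside each element. -/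
def Mesh.IsPL {N : ℕ} (m : Mesh N) (v : H1) : Prop :=
  ∀ i < N, ∃ s : ℝ, ∀ t ∈ Set.Ioo (m.x i) (m.x (i+1)), v.dval t = s

/-- `uh` is the linear finite element solution on the mesh `m`:
a continuous piecewise linear function vanishing at 0 and 1 with
B(u_h, v_h) = (f, v_h) for all piecewise linear v_h vanishing at 0 and 1. -/
def Coeffs.IsFESolution (P : Coeffs) (f : ℝ → ℝ) {N : ℕ} (m : Mesh N) (uh : H1) : Prop :=
  uh.val 0 = 0 ∧ uh.val 1 = 0 ∧ m.IsPL uh ∧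
    ∀ v : H1, v.val 0 = 0 → v.val 1 = 0 → m.IsPL v → P.B uh v = ip f v

/-- The residual of `w`: r = f + a' w' − b w' − c w. -/
def Coeffs.res (P : Coeffs) (f : ℝ → ℝ) (w : H1) : ℝ → ℝ :=
  fun t => f t + P.a' t * w.dval t - P.b t * w.dval t - P.c t * w.val t

/-- The element L² average ⟨g⟩_i = (h_i⁻¹ ∫_{K_i} g²)^{1/2}. -/
def Mesh.avg {N : ℕ} (m : Mesh N) (g : ℝ → ℝ) (i : ℕ) : ℝ :=
  Real.sqrt ((1 / m.h i) * ∫ t in (m.x i)..(m.x (i+1)), (g t)^2)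

/-- The intensity parameter α_h = (Σ_i h_i ⟨g⟩_i^{2/3})³. -/
def Mesh.alpha {N : ℕ} (m : Mesh N) (g : ℝ → ℝ) : ℝ :=
  (∑ i ∈ Finset.range N, m.h i * (m.avg g i) ^ ((2:ℝ)/3)) ^ 3

/-- The adaptation function value ρ_i = (1 + α_h⁻¹ ⟨g⟩_i²)^{1/3}. -/
def Mesh.rho {N : ℕ} (m : Mesh N) (g : ℝ → ℝ) (i : ℕ) : ℝ :=
  (1 + (m.alpha g)⁻¹ * (m.avg g i)^2) ^ ((1:ℝ)/3)

/-- σ_h = Σ_i ρ_i h_i. -/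
def Mesh.sigma {N : ℕ} (m : Mesh N) (g : ℝ → ℝ) : ℝ :=
  ∑ i ∈ Finset.range N, m.rho g i * m.h i

/-- The mesh equidistributes (the piecewise constant adaptation function built from) `g`:
ρ_i h_i = σ_h / N for all elements. -/
def Mesh.IsEquidistributing {N : ℕ} (m : Mesh N) (g : ℝ → ℝ) : Prop :=
  ∀ i < N, m.rho g i * m.h i = m.sigma g / (N:ℝ)

/-- Membership in the mesh set S_N: 1/(ρ₀ N) ≤ h_i ≤ 2/N for all i. -/
def Mesh.InS {N : ℕ} (m : Mesh N) (ρ0 : ℝ) : Prop :=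
  ∀ i < N, 1 / (ρ0 * (N:ℝ)) ≤ m.h i ∧ m.h i ≤ 2 / (N:ℝ)

/-- The maximum norm distance ‖X − X̃‖_∞ between two meshes with the same N. -/
def meshDist {N : ℕ} (m m' : Mesh N) : ℝ :=
  (Finset.range (N+1)).sup' (Finset.nonempty_range_iff.mpr (Nat.succ_ne_zero N))
    (fun i => |m.x i - m'.x i|)

/-- The energy norm squared ‖v‖_E² = ∫₀¹ (a v'² + (c − b'/2) v²) dx. -/
def Coeffs.energySq (P : Coeffs) (v : H1) : ℝ :=
  ∫ t in (0:ℝ)..1, (P.a t * (v.dval t)^2 + (P.c t - P.b' t / 2) * (v.val t)^2)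


/-!
The error `e = u - u_h` is Galerkin orthogonal to its nodal interpolant `I e`, and `e - I e`
vanishes at the nodes, so integrating by parts on each element gives `B(e, e) = ∫ r_h (e - I e)`.
Since `B(e, e)` is the energy of `e`, it dominates `a₀ ‖e'‖²`, while Young's inequality and
`‖e - I e‖_{K_i} ≤ h_i ‖e'‖_{K_i}` bound the right-hand side. What remains is
`a₀² ‖e'‖² ≤ ∑ h_i³ ⟨r_h⟩_i²`.

Equidistribution controls the estimator termwise: `⟨r_h⟩_i² ≤ α_h ρ_i³` makes each term at most
`α_h (ρ_i h_i)³ = α_h (σ_h / N)³`, and `σ_h ≤ 2` because `(1 + s)^(1/3) ≤ 1 + s^(1/3)` and `α_h` is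
normalized so that `∑ h_i (α_h⁻¹ ⟨r_h⟩_i²)^(1/3) ≤ 1`.
-/

/-- `g` is absolutely continuous on the interval between `p` and `q`, with derivative `g'`,
expressed by the fundamental theorem of calculus. Unlike `HasL1Deriv`, this lives on any interval,
hence passes to the elements of a mesh, and asks for no global measurability of `g'`, hence is
stable under products. -/
structure IsPrimitiveOn (g g' : ℝ → ℝ) (p q : ℝ) : Prop where
  intervalIntegrable : IntervalIntegrable g' volume p q
  eq_add_integral : ∀ x ∈ Set.uIcc p q, g x = g p + ∫ t in p..x, g' t

namespace IsPrimitiveOn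

variable {f f' g g' : ℝ → ℝ} {p q r s : ℝ}

lemma mono (hg : IsPrimitiveOn g g' p q) (hrs : Set.uIcc r s ⊆ Set.uIcc p q) :
    IsPrimitiveOn g g' r s := by
  have integrable_from_p {x : ℝ} (hx : x ∈ Set.uIcc r s) : IntervalIntegrable g' volume p x :=
    hg.intervalIntegrable.mono_set (Set.uIcc_subset_uIcc_left (hrs hx))
  refine ⟨hg.intervalIntegrable.mono_set hrs, fun x hx => ?_⟩
  rw [hg.eq_add_integral x (hrs hx), hg.eq_add_integral r (hrs Set.left_mem_uIcc), add_assoc,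
    intervalIntegral.integral_add_adjacent_intervals (integrable_from_p Set.left_mem_uIcc)
      ((integrable_from_p Set.left_mem_uIcc).symm.trans (integrable_from_p hx))]

lemma integral_eq_sub (hg : IsPrimitiveOn g g' p q) : ∫ t in p..q, g' t = g q - g p := by
  rw [hg.eq_add_integral q Set.right_mem_uIcc, add_sub_cancel_left]

lemma average_eq_slope (hg : IsPrimitiveOn g g' p q) : ⨍ t in p..q, g' t = slope g p q := by
  rw [interval_average_eq_div, hg.integral_eq_sub, slope_def_field]

lemma absolutelyContinuousOnInterval_integral (hg : IsPrimitiveOn g g' p q) :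
    AbsolutelyContinuousOnInterval (fun x => g p + ∫ t in p..x, g' t) p q :=
  (contDiffOn_const (n := 1)).absolutelyContinuousOnInterval.fun_add
    (hg.intervalIntegrable.absolutelyContinuousOnInterval_intervalIntegral Set.left_mem_uIcc)

lemma continuousOn (hg : IsPrimitiveOn g g' p q) : ContinuousOn g (Set.uIcc p q) :=
  hg.absolutelyContinuousOnInterval_integral.continuousOn.congr hg.eq_add_integral

lemma sub (hf : IsPrimitiveOn f f' p q) (hg : IsPrimitiveOn g g' p q) :
    IsPrimitiveOn (fun x => f x - g x) (fun x => f' x - g' x) p q where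
  intervalIntegrable := hf.intervalIntegrable.sub hg.intervalIntegrable
  eq_add_integral x hx := by
    have hsub : Set.uIcc p x ⊆ Set.uIcc p q := Set.uIcc_subset_uIcc_left hx
    rw [intervalIntegral.integral_sub (hf.mono hsub).intervalIntegrable
      (hg.mono hsub).intervalIntegrable, (hf.mono hsub).integral_eq_sub,
      (hg.mono hsub).integral_eq_sub]
    ring

lemma integral_deriv_mul_eq_sub (hf : IsPrimitiveOn f f' p q) (hg : IsPrimitiveOn g g' p q) :
    ∫ t in p..q, (f' t * g t + f t * g' t) = f q * g q - f p * g p := by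
  have key := hf.absolutelyContinuousOnInterval_integral.integral_deriv_mul_eq_sub
    hg.absolutelyContinuousOnInterval_integral
  simp only [← hf.eq_add_integral q Set.right_mem_uIcc, ← hg.eq_add_integral q Set.right_mem_uIcc,
    intervalIntegral.integral_same, add_zero] at key
  rw [← key]
  refine intervalIntegral.integral_congr_ae ?_
  filter_upwards [hf.intervalIntegrable.ae_hasDerivAt_integral,
    hg.intervalIntegrable.ae_hasDerivAt_integral] with t hft hgt ht
  have ht : t ∈ Set.uIcc p q := Set.uIoc_subset_uIcc ht
  rw [((hft ht p Set.left_mem_uIcc).const_add (f p)).deriv,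
    ((hgt ht p Set.left_mem_uIcc).const_add (g p)).deriv,
    ← hf.eq_add_integral t ht, ← hg.eq_add_integral t ht]

lemma mul (hf : IsPrimitiveOn f f' p q) (hg : IsPrimitiveOn g g' p q) :
    IsPrimitiveOn (fun x => f x * g x) (fun x => f' x * g x + f x * g' x) p q where
  intervalIntegrable := (hf.intervalIntegrable.mul_continuousOn hg.continuousOn).add
    (hg.intervalIntegrable.continuousOn_mul hf.continuousOn)
  eq_add_integral x hx := by
    have hsub : Set.uIcc p x ⊆ Set.uIcc p q := Set.uIcc_subset_uIcc_left hx
    rw [(hf.mono hsub).integral_deriv_mul_eq_sub (hg.mono hsub), add_sub_cancel]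

end IsPrimitiveOn

section IntervalInequalities

variable {f g : ℝ → ℝ} {p q : ℝ}

lemma integral_sub_average_sq (hg : IntervalIntegrable g volume p q)
    (hg2 : IntervalIntegrable (fun t => g t ^ 2) volume p q) :
    ∫ t in p..q, (g t - ⨍ s in p..q, g s) ^ 2 =
      (∫ t in p..q, g t ^ 2) - (q - p) * (⨍ s in p..q, g s) ^ 2 := by
  set k := ⨍ s in p..q, g s with hk
  have integral_eq : ∫ s in p..q, g s = k * (q - p) := by
    rcases eq_or_ne p q with rfl | hpq
    · simp
    · rw [hk, interval_average_eq_div, div_mul_cancel₀ _ (sub_ne_zero.2 hpq.symm)]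
  have expand (t : ℝ) : (g t - k) ^ 2 = g t ^ 2 - 2 * k * g t + k ^ 2 := by ring
  simp_rw [expand]
  rw [intervalIntegral.integral_add (hg2.sub (hg.const_mul _)) intervalIntegrable_const,
    intervalIntegral.integral_sub hg2 (hg.const_mul _), intervalIntegral.integral_const_mul,
    intervalIntegral.integral_const, integral_eq, smul_eq_mul]
  ring

lemma integral_sub_average_sq_le (hpq : p ≤ q) (hg : IntervalIntegrable g volume p q)
    (hg2 : IntervalIntegrable (fun t => g t ^ 2) volume p q) :
    ∫ t in p..q, (g t - ⨍ s in p..q, g s) ^ 2 ≤ ∫ t in p..q, g t ^ 2 := by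
  rw [integral_sub_average_sq hg hg2]
  exact sub_le_self _ (mul_nonneg (sub_nonneg.2 hpq) (sq_nonneg _))

lemma sq_integral_le (hpq : p ≤ q) (hg : IntervalIntegrable g volume p q)
    (hg2 : IntervalIntegrable (fun t => g t ^ 2) volume p q) :
    (∫ t in p..q, g t) ^ 2 ≤ (q - p) * ∫ t in p..q, g t ^ 2 := by
  rcases hpq.eq_or_lt with rfl | hlt
  · simp
  have variance_nonneg : 0 ≤ (∫ t in p..q, g t ^ 2) - (q - p) * (⨍ s in p..q, g s) ^ 2 :=
    integral_sub_average_sq hg hg2 ▸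
      intervalIntegral.integral_nonneg hpq fun t _ => sq_nonneg _
  have hne : q - p ≠ 0 := (sub_pos.2 hlt).ne'
  calc (∫ t in p..q, g t) ^ 2 = (q - p) * ((q - p) * (⨍ s in p..q, g s) ^ 2) := by
        rw [interval_average_eq_div]
        field_simp [hne]
    _ ≤ (q - p) * ∫ t in p..q, g t ^ 2 := by
        gcongr
        exact sub_nonneg.1 variance_nonneg

lemma two_mul_integral_mul_le {ε : ℝ} (hε : 0 < ε) (hpq : p ≤ q)
    (hf2 : IntervalIntegrable (fun t => f t ^ 2) volume p q)
    (hg2 : IntervalIntegrable (fun t => g t ^ 2) volume p q)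
    (hfg : IntervalIntegrable (fun t => f t * g t) volume p q) :
    2 * ∫ t in p..q, f t * g t ≤
      ε * (∫ t in p..q, f t ^ 2) + ε⁻¹ * ∫ t in p..q, g t ^ 2 := by
  simp only [← intervalIntegral.integral_const_mul]
  rw [← intervalIntegral.integral_add (hf2.const_mul ε) (hg2.const_mul ε⁻¹)]
  refine intervalIntegral.integral_mono_on hpq (hfg.const_mul 2)
    ((hf2.const_mul ε).add (hg2.const_mul ε⁻¹)) fun t _ => ?_
  rw [← mul_assoc]
  exact two_mul_le_add_mul_sq hε

lemma IsPrimitiveOn.integral_sq_le {g' : ℝ → ℝ} (hg : IsPrimitiveOn g g' p q)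
    (hg2 : IntervalIntegrable (fun t => g' t ^ 2) volume p q) (hpq : p ≤ q) (hgp : g p = 0) :
    ∫ t in p..q, g t ^ 2 ≤ (q - p) ^ 2 * ∫ t in p..q, g' t ^ 2 := by
  have pointwise : ∀ x ∈ Set.Icc p q, g x ^ 2 ≤ (q - p) * ∫ t in p..q, g' t ^ 2 := by
    intro x hx
    have hsub : Set.uIcc p x ⊆ Set.uIcc p q :=
      Set.uIcc_subset_uIcc_left (Set.Icc_subset_uIcc hx)
    have hgx : g x = ∫ t in p..x, g' t := by rw [(hg.mono hsub).integral_eq_sub, hgp, sub_zero]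
    calc g x ^ 2 ≤ (x - p) * ∫ t in p..x, g' t ^ 2 := hgx ▸
          sq_integral_le hx.1 (hg.mono hsub).intervalIntegrable (hg2.mono_set hsub)
      _ ≤ (q - p) * ∫ t in p..q, g' t ^ 2 := by
          have hnonneg : 0 ≤ ∫ t in p..x, g' t ^ 2 :=
            intervalIntegral.integral_nonneg hx.1 fun t _ => sq_nonneg _
          gcongr
          · exact hx.2
          · exact intervalIntegral.integral_mono_interval le_rfl hx.1 hx.2
              (Filter.Eventually.of_forall fun t => sq_nonneg _) hg2
  calc ∫ t in p..q, g t ^ 2 ≤ ∫ _ in p..q, (q - p) * ∫ t in p..q, g' t ^ 2 :=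
        intervalIntegral.integral_mono_on hpq (hg.continuousOn.pow 2).intervalIntegrable
          intervalIntegrable_const pointwise
    _ = (q - p) ^ 2 * ∫ t in p..q, g' t ^ 2 := by
        rw [intervalIntegral.integral_const, smul_eq_mul]
        ring

end IntervalInequalities

/-- Lebesgue measure on `(0, 1]`, the measure underlying the interval integrals from `0` to `1`. It
gives access to the `MemLp` calculus. -/
abbrev unitMeasure : Measure ℝ := volume.restrict (Set.Ioc 0 1)

section UnitMeasure

variable {g : ℝ → ℝ}

lemma intervalIntegrable_iff_integrable_unitMeasure :
    IntervalIntegrable g volume 0 1 ↔ Integrable g unitMeasure :=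
  intervalIntegrable_iff_integrableOn_Ioc_of_le zero_le_one

lemma MemL2.memLp (hg : MemL2 g) : MemLp g 2 unitMeasure :=
  (memLp_two_iff_integrable_sq hg.1.aestronglyMeasurable).2
    (intervalIntegrable_iff_integrable_unitMeasure.1 hg.2)

lemma MemLinf.memLp (hg : MemLinf g) : MemLp g ⊤ unitMeasure := by
  obtain ⟨hmeas, M, hM⟩ := hg
  rw [Measure.restrict_congr_set Ioo_ae_eq_Ioc] at hM
  exact memLp_top_of_bound hmeas.aestronglyMeasurable M hM

lemma memLp_top_of_continuousOn_uIcc (hg : ContinuousOn g (Set.uIcc 0 1)) :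
    MemLp g ⊤ unitMeasure := by
  rw [Set.uIcc_of_le zero_le_one] at hg
  obtain ⟨M, hM⟩ := isCompact_Icc.exists_bound_of_continuousOn hg
  refine memLp_top_of_bound
    ((hg.mono Set.Ioc_subset_Icc_self).aestronglyMeasurable measurableSet_Ioc) M ?_
  filter_upwards [ae_restrict_mem measurableSet_Ioc] with x hx
  exact hM x (Set.Ioc_subset_Icc_self hx)

end UnitMeasure

namespace H1

lemma isPrimitiveOn (u : H1) : IsPrimitiveOn u.val u.dval 0 1 :=
  ⟨u.dval_int, Set.uIcc_of_le (zero_le_one (α := ℝ)) ▸ u.ftc⟩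

lemma memLp_dval (u : H1) : MemLp u.dval 2 unitMeasure :=
  MemL2.memLp ⟨u.dval_meas, u.dval_sq_int⟩

lemma memLp_val (u : H1) : MemLp u.val ⊤ unitMeasure :=
  memLp_top_of_continuousOn_uIcc u.isPrimitiveOn.continuousOn

lemma intervalIntegrable_mul_val {g : ℝ → ℝ} (hg : MemLp g 2 unitMeasure) (v : H1) :
    IntervalIntegrable (fun t => g t * v.val t) volume 0 1 :=
  have hgv : MemLp (fun t => g t * v.val t) 2 unitMeasure := v.memLp_val.mul' hg
  intervalIntegrable_iff_integrable_unitMeasure.2 (hgv.integrable one_le_two)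

instance : Sub H1 where
  sub u w :=
    { val := fun t => u.val t - w.val t
      dval := fun t => u.dval t - w.dval t
      dval_meas := u.dval_meas.sub w.dval_meas
      dval_int := u.dval_int.sub w.dval_int
      dval_sq_int := intervalIntegrable_iff_integrable_unitMeasure.2
        (u.memLp_dval.sub w.memLp_dval).integrable_sq
      ftc := Set.uIcc_of_le (zero_le_one (α := ℝ)) ▸
        (u.isPrimitiveOn.sub w.isPrimitiveOn).eq_add_integral }

@[simp] lemma sub_val (u w : H1) (t : ℝ) : (u - w).val t = u.val t - w.val t := rfl

@[simp] lemma sub_dval (u w : H1) (t : ℝ) : (u - w).dval t = u.dval t - w.dval t := rfl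

end H1

namespace Mesh

variable {N : ℕ} (m : Mesh N)

lemma monotoneOn_x : MonotoneOn m.x (Set.Iic N) :=
  monotoneOn_of_le_add_one Set.ordConnected_Iic fun i _ _ hi => (m.x_mono i hi).le

lemma x_mem_uIcc {i : ℕ} (hi : i ≤ N) : m.x i ∈ Set.uIcc (0 : ℝ) 1 := by
  rw [Set.uIcc_of_le zero_le_one]
  exact ⟨m.x_zero ▸ m.monotoneOn_x (Set.mem_Iic.2 N.zero_le) hi i.zero_le,
    m.x_last ▸ m.monotoneOn_x hi Set.self_mem_Iic hi⟩

lemma uIcc_x_subset {i : ℕ} (hi : i < N) :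
    Set.uIcc (m.x i) (m.x (i + 1)) ⊆ Set.uIcc (0 : ℝ) 1 :=
  Set.uIcc_subset_uIcc (m.x_mem_uIcc hi.le) (m.x_mem_uIcc hi)

lemma pairwiseDisjoint_Ioo_x :
    (Finset.range N : Set ℕ).PairwiseDisjoint fun i => Set.Ioo (m.x i) (m.x (i + 1)) := by
  intro i hi j hj hij
  rw [Finset.coe_range, Set.mem_Iio] at hi hj
  rcases hij.lt_or_gt with hlt | hlt
  · exact Set.disjoint_left.2 fun t ht ht' =>
      (ht.2.trans_le (m.monotoneOn_x hi hj.le hlt)).not_gt ht'.1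
  · exact Set.disjoint_left.2 fun t ht ht' =>
      (ht'.2.trans_le (m.monotoneOn_x hj hi.le hlt)).not_gt ht.1

lemma pos (m : Mesh N) : 0 < N := by
  rcases N.eq_zero_or_pos with rfl | hN
  · exact absurd (m.x_zero.symm.trans m.x_last) zero_ne_one
  · exact hN

lemma h_pos {i : ℕ} (hi : i < N) : 0 < m.h i := sub_pos.2 (m.x_mono i hi)

lemma sum_h : ∑ i ∈ Finset.range N, m.h i = 1 := by
  simp only [h, Finset.sum_range_sub, m.x_zero, m.x_last, sub_zero]

lemma sum_integral {g : ℝ → ℝ} (hg : IntervalIntegrable g volume 0 1) :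
    ∑ i ∈ Finset.range N, ∫ t in m.x i..m.x (i + 1), g t = ∫ t in (0 : ℝ)..1, g t := by
  rw [intervalIntegral.sum_integral_adjacent_intervals (a := m.x) fun i hi =>
    hg.mono_set (m.uIcc_x_subset hi), m.x_zero, m.x_last]

lemma avg_nonneg (g : ℝ → ℝ) (i : ℕ) : 0 ≤ m.avg g i := Real.sqrt_nonneg _

lemma h_mul_avg_sq (g : ℝ → ℝ) {i : ℕ} (hi : i < N) :
    m.h i * m.avg g i ^ 2 = ∫ t in m.x i..m.x (i + 1), g t ^ 2 := by
  have hh := m.h_pos hi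
  have hnonneg : 0 ≤ ∫ t in m.x i..m.x (i + 1), g t ^ 2 :=
    intervalIntegral.integral_nonneg (m.x_mono i hi).le fun t _ => sq_nonneg _
  rw [avg, Real.sq_sqrt (by positivity)]
  field_simp

section Equidistribution

variable (g : ℝ → ℝ)

lemma h_mul_avg_rpow_nonneg {i : ℕ} (hi : i ∈ Finset.range N) :
    0 ≤ m.h i * m.avg g i ^ ((2 : ℝ) / 3) :=
  mul_nonneg (m.h_pos (Finset.mem_range.1 hi)).le (Real.rpow_nonneg (m.avg_nonneg g i) _)

lemma alpha_nonneg : 0 ≤ m.alpha g :=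
  pow_nonneg (Finset.sum_nonneg fun _ => m.h_mul_avg_rpow_nonneg g) 3

lemma alpha_rpow_one_third :
    m.alpha g ^ ((1 : ℝ) / 3) = ∑ i ∈ Finset.range N, m.h i * m.avg g i ^ ((2 : ℝ) / 3) := by
  rw [alpha, one_div]
  exact Real.pow_rpow_inv_natCast
    (Finset.sum_nonneg fun _ => m.h_mul_avg_rpow_nonneg g) three_ne_zero

lemma avg_eq_zero_of_alpha_eq_zero {g : ℝ → ℝ} (hα : m.alpha g = 0) {i : ℕ} (hi : i < N) :
    m.avg g i = 0 := by
  have hsum := (pow_eq_zero_iff three_ne_zero).1 hα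
  rw [Finset.sum_eq_zero_iff_of_nonneg fun _ => m.h_mul_avg_rpow_nonneg g] at hsum
  have hterm := (mul_eq_zero_iff_left (m.h_pos hi).ne').1 (hsum i (Finset.mem_range.2 hi))
  exact ((Real.rpow_eq_zero_iff_of_nonneg (m.avg_nonneg g i)).1 hterm).1

lemma inv_alpha_mul_avg_sq_nonneg (i : ℕ) : 0 ≤ (m.alpha g)⁻¹ * m.avg g i ^ 2 :=
  mul_nonneg (inv_nonneg.2 (m.alpha_nonneg g)) (sq_nonneg _)

lemma rho_nonneg (i : ℕ) : 0 ≤ m.rho g i :=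
  Real.rpow_nonneg (add_nonneg zero_le_one (m.inv_alpha_mul_avg_sq_nonneg g i)) _

lemma rho_pow_three (i : ℕ) : m.rho g i ^ 3 = 1 + (m.alpha g)⁻¹ * m.avg g i ^ 2 := by
  rw [rho, one_div]
  exact Real.rpow_inv_natCast_pow
    (add_nonneg zero_le_one (m.inv_alpha_mul_avg_sq_nonneg g i)) three_ne_zero

lemma rho_le (i : ℕ) :
    m.rho g i ≤ 1 + (m.alpha g ^ ((1 : ℝ) / 3))⁻¹ * m.avg g i ^ ((2 : ℝ) / 3) := by
  have avg_sq_rpow : (m.avg g i ^ 2) ^ ((1 : ℝ) / 3) = m.avg g i ^ ((2 : ℝ) / 3) := by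
    rw [← Real.rpow_natCast_mul (m.avg_nonneg g i)]
    norm_num
  calc m.rho g i
      ≤ 1 ^ ((1 : ℝ) / 3) + ((m.alpha g)⁻¹ * m.avg g i ^ 2) ^ ((1 : ℝ) / 3) :=
        Real.rpow_add_le_add_rpow zero_le_one (m.inv_alpha_mul_avg_sq_nonneg g i)
          (by norm_num) (by norm_num)
    _ = 1 + (m.alpha g ^ ((1 : ℝ) / 3))⁻¹ * m.avg g i ^ ((2 : ℝ) / 3) := by
        rw [Real.one_rpow, Real.mul_rpow (inv_nonneg.2 (m.alpha_nonneg g)) (sq_nonneg _),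
          Real.inv_rpow (m.alpha_nonneg g), avg_sq_rpow]

lemma sigma_le_two : m.sigma g ≤ 2 := by
  set A := m.alpha g ^ ((1 : ℝ) / 3) with hA
  calc m.sigma g
      ≤ ∑ i ∈ Finset.range N, (1 + A⁻¹ * m.avg g i ^ ((2 : ℝ) / 3)) * m.h i :=
        Finset.sum_le_sum fun i hi => mul_le_mul_of_nonneg_right (m.rho_le g i)
          (m.h_pos (Finset.mem_range.1 hi)).le
    _ = ∑ i ∈ Finset.range N, m.h i +
          A⁻¹ * ∑ i ∈ Finset.range N, m.h i * m.avg g i ^ ((2 : ℝ) / 3) := by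
        rw [Finset.mul_sum, ← Finset.sum_add_distrib]
        exact Finset.sum_congr rfl fun i _ => by ring
    _ = 1 + A⁻¹ * A := by rw [m.sum_h, hA, alpha_rpow_one_third]
    _ ≤ 2 := by linarith [inv_mul_le_one (a := A)]

lemma avg_sq_le {i : ℕ} (hi : i < N) : m.avg g i ^ 2 ≤ m.alpha g * m.rho g i ^ 3 := by
  rcases eq_or_ne (m.alpha g) 0 with hα | hα
  · simp [m.avg_eq_zero_of_alpha_eq_zero hα hi, hα]
  · rw [m.rho_pow_three, mul_add, mul_inv_cancel_left₀ hα, mul_one]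
    exact le_add_of_nonneg_left (m.alpha_nonneg g)

lemma IsEquidistributing.sum_h_pow_three_mul_avg_sq_le {m : Mesh N} {g : ℝ → ℝ}
    (hm : m.IsEquidistributing g) :
    ∑ i ∈ Finset.range N, m.h i ^ 3 * m.avg g i ^ 2 ≤ 8 * m.alpha g / (N : ℝ) ^ 2 := by
  have hN : (0 : ℝ) < N := Nat.cast_pos.2 m.pos
  have hα := m.alpha_nonneg g
  have hterm : ∀ i ∈ Finset.range N,
      m.h i ^ 3 * m.avg g i ^ 2 ≤ m.alpha g * (2 / N) ^ 3 := by
    intro i hi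
    rw [Finset.mem_range] at hi
    have hh := m.h_pos hi
    have hρ := m.rho_nonneg g i
    calc m.h i ^ 3 * m.avg g i ^ 2 ≤ m.h i ^ 3 * (m.alpha g * m.rho g i ^ 3) := by
          gcongr
          exact m.avg_sq_le g hi
      _ = m.alpha g * (m.rho g i * m.h i) ^ 3 := by ring
      _ ≤ m.alpha g * (2 / N) ^ 3 := by
          gcongr
          rw [hm i hi]
          gcongr
          exact m.sigma_le_two g
  calc ∑ i ∈ Finset.range N, m.h i ^ 3 * m.avg g i ^ 2
      ≤ N * (m.alpha g * (2 / N) ^ 3) := by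
        simpa only [Finset.card_range, nsmul_eq_mul] using Finset.sum_le_card_nsmul _ _ _ hterm
    _ = 8 * m.alpha g / (N : ℝ) ^ 2 := by
        field_simp
        norm_num

end Equidistribution

section Interpolation

/-- The derivative of the nodal interpolant of `g`: the difference quotient of `g` over each
element, with the value `0` at the nodes. -/
def interpDeriv (g : ℝ → ℝ) (t : ℝ) : ℝ :=
  ∑ i ∈ Finset.range N,
    (Set.Ioo (m.x i) (m.x (i + 1))).indicator (fun _ => slope g (m.x i) (m.x (i + 1))) t

lemma interpDeriv_eq_slope (g : ℝ → ℝ) {i : ℕ} (hi : i < N) {t : ℝ}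
    (ht : t ∈ Set.Ioo (m.x i) (m.x (i + 1))) :
    m.interpDeriv g t = slope g (m.x i) (m.x (i + 1)) := by
  have hi : i ∈ Finset.range N := Finset.mem_range.2 hi
  rw [interpDeriv, Finset.sum_eq_single_of_mem i hi, Set.indicator_of_mem ht]
  exact fun j hj hji => Set.indicator_of_notMem
    (fun htj => (m.pairwiseDisjoint_Ioo_x hj hi hji).le_bot ⟨htj, ht⟩) _

lemma measurable_interpDeriv (g : ℝ → ℝ) : Measurable (m.interpDeriv g) :=
  Finset.measurable_fun_sum _ fun _ _ => measurable_const.indicator measurableSet_Ioo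

lemma memLp_interpDeriv (g : ℝ → ℝ) : MemLp (m.interpDeriv g) 2 unitMeasure :=
  memLp_finsetSum _ fun _ _ => (memLp_const _).indicator measurableSet_Ioo

/-- The nodal interpolant of `g`: the piecewise linear function with the values of `g` at the nodes
of the mesh. -/
def interp (g : ℝ → ℝ) : H1 where
  val x := g 0 + ∫ t in (0 : ℝ)..x, m.interpDeriv g t
  dval := m.interpDeriv g
  dval_meas := m.measurable_interpDeriv g
  dval_int := intervalIntegrable_iff_integrable_unitMeasure.2
    ((m.memLp_interpDeriv g).integrable one_le_two)
  dval_sq_int := intervalIntegrable_iff_integrable_unitMeasure.2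
    (m.memLp_interpDeriv g).integrable_sq
  ftc x _ := by rw [intervalIntegral.integral_same, add_zero]

lemma isPL_interp (g : ℝ → ℝ) : m.IsPL (m.interp g) :=
  fun _ hi => ⟨_, fun _ => m.interpDeriv_eq_slope g hi⟩

@[simp] lemma interp_val_zero (g : ℝ → ℝ) : (m.interp g).val 0 = g 0 := by simp [interp]

lemma interp_val_x (g : ℝ → ℝ) {i : ℕ} (hi : i ≤ N) :
    (m.interp g).val (m.x i) = g (m.x i) := by
  induction i with
  | zero => rw [m.x_zero, interp_val_zero]
  | succ i ih =>
    have hlt := m.x_mono i hi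
    have increment : ∫ t in m.x i..m.x (i + 1), (m.interp g).dval t =
        g (m.x (i + 1)) - g (m.x i) := by
      rw [intervalIntegral.integral_congr_Ioo_of_le (f := (m.interp g).dval)
        (g := fun _ => slope g _ _) hlt.le fun t => m.interpDeriv_eq_slope g hi,
        intervalIntegral.integral_const]
      exact sub_smul_slope g _ _
    have hI := ((m.interp g).isPrimitiveOn.mono (m.uIcc_x_subset hi)).integral_eq_sub
    rw [increment, ih (Nat.le_of_succ_le hi)] at hI
    linarith

@[simp] lemma interp_val_one (g : ℝ → ℝ) : (m.interp g).val 1 = g 1 :=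
  m.x_last ▸ m.interp_val_x g le_rfl

variable (v : H1) {i : ℕ}

lemma integral_dval_sub_interp_sq_le (hi : i < N) :
    ∫ t in m.x i..m.x (i + 1), (v - m.interp v.val).dval t ^ 2 ≤
      ∫ t in m.x i..m.x (i + 1), v.dval t ^ 2 := by
  have hsub := m.uIcc_x_subset hi
  have hlt := m.x_mono i hi
  calc ∫ t in m.x i..m.x (i + 1), (v - m.interp v.val).dval t ^ 2
      = ∫ t in m.x i..m.x (i + 1), (v.dval t - ⨍ s in m.x i..m.x (i + 1), v.dval s) ^ 2 := by
        refine intervalIntegral.integral_congr_Ioo_of_le hlt.le fun t ht => ?_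
        simp only [H1.sub_dval, interp, m.interpDeriv_eq_slope v.val hi ht,
          (v.isPrimitiveOn.mono hsub).average_eq_slope]
    _ ≤ ∫ t in m.x i..m.x (i + 1), v.dval t ^ 2 :=
        integral_sub_average_sq_le hlt.le (v.dval_int.mono_set hsub) (v.dval_sq_int.mono_set hsub)

lemma integral_sub_interp_sq_le (hi : i < N) :
    ∫ t in m.x i..m.x (i + 1), (v - m.interp v.val).val t ^ 2 ≤
      m.h i ^ 2 * ∫ t in m.x i..m.x (i + 1), v.dval t ^ 2 := by
  have hsub := m.uIcc_x_subset hi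
  set w := v - m.interp v.val with hw
  have hwx : w.val (m.x i) = 0 := by rw [hw, H1.sub_val, m.interp_val_x _ hi.le, sub_self]
  calc ∫ t in m.x i..m.x (i + 1), w.val t ^ 2
      ≤ m.h i ^ 2 * ∫ t in m.x i..m.x (i + 1), w.dval t ^ 2 :=
        (w.isPrimitiveOn.mono hsub).integral_sq_le (w.dval_sq_int.mono_set hsub)
          (m.x_mono i hi).le hwx
    _ ≤ m.h i ^ 2 * ∫ t in m.x i..m.x (i + 1), v.dval t ^ 2 := by
        gcongr
        exact m.integral_dval_sub_interp_sq_le v hi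

variable {g : ℝ → ℝ} {κ : ℝ}

lemma two_mul_integral_mul_sub_interp_le_on_element (hg : MemLp g 2 unitMeasure) (hκ : 0 < κ)
    (hi : i < N) :
    2 * κ * ∫ t in m.x i..m.x (i + 1), g t * (v - m.interp v.val).val t ≤
      m.h i ^ 3 * m.avg g i ^ 2 + κ ^ 2 * ∫ t in m.x i..m.x (i + 1), v.dval t ^ 2 := by
  have hsub := m.uIcc_x_subset hi
  have hh := m.h_pos hi
  set w := v - m.interp v.val
  have young := two_mul_integral_mul_le (ε := m.h i ^ 2 / κ) (by positivity) (m.x_mono i hi).le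
    ((intervalIntegrable_iff_integrable_unitMeasure.2 hg.integrable_sq).mono_set hsub)
    ((w.isPrimitiveOn.continuousOn.pow 2).mono hsub).intervalIntegrable
    ((H1.intervalIntegrable_mul_val hg w).mono_set hsub)
  calc 2 * κ * ∫ t in m.x i..m.x (i + 1), g t * w.val t
      = κ * (2 * ∫ t in m.x i..m.x (i + 1), g t * w.val t) := by ring
    _ ≤ κ * (m.h i ^ 2 / κ * (∫ t in m.x i..m.x (i + 1), g t ^ 2) +
          (m.h i ^ 2 / κ)⁻¹ * (m.h i ^ 2 * ∫ t in m.x i..m.x (i + 1), v.dval t ^ 2)) := by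
        refine mul_le_mul_of_nonneg_left (young.trans ?_) hκ.le
        gcongr
        exact m.integral_sub_interp_sq_le v hi
    _ = m.h i ^ 3 * m.avg g i ^ 2 + κ ^ 2 * ∫ t in m.x i..m.x (i + 1), v.dval t ^ 2 := by
        rw [← m.h_mul_avg_sq g hi]
        field_simp

lemma two_mul_integral_mul_sub_interp_le (hg : MemLp g 2 unitMeasure) (hκ : 0 < κ) :
    2 * κ * ∫ t in (0 : ℝ)..1, g t * (v - m.interp v.val).val t ≤
      ∑ i ∈ Finset.range N, m.h i ^ 3 * m.avg g i ^ 2 +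
        κ ^ 2 * ∫ t in (0 : ℝ)..1, v.dval t ^ 2 := by
  rw [← m.sum_integral (H1.intervalIntegrable_mul_val hg _), ← m.sum_integral v.dval_sq_int,
    Finset.mul_sum, Finset.mul_sum, ← Finset.sum_add_distrib]
  exact Finset.sum_le_sum fun i hi =>
    m.two_mul_integral_mul_sub_interp_le_on_element v hg hκ (Finset.mem_range.1 hi)

end Interpolation

end Mesh

namespace Coeffs

variable (P : Coeffs) {f : ℝ → ℝ}

lemma isPrimitiveOn_a : IsPrimitiveOn P.a P.a' 0 1 :=
  ⟨P.a'_int, Set.uIcc_of_le (zero_le_one (α := ℝ)) ▸ P.ftc_a⟩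

lemma isPrimitiveOn_b : IsPrimitiveOn P.b P.b' 0 1 :=
  ⟨P.b'_int, Set.uIcc_of_le (zero_le_one (α := ℝ)) ▸ P.ftc_b⟩

lemma memLp_b_mul_dval (u : H1) : MemLp (fun t => P.b t * u.dval t) 2 unitMeasure :=
  u.memLp_dval.mul' (memLp_top_of_continuousOn_uIcc P.isPrimitiveOn_b.continuousOn)

lemma memLp_c_mul_val (u : H1) : MemLp (fun t => P.c t * u.val t) 2 unitMeasure :=
  have hcu : MemLp (fun t => P.c t * u.val t) ⊤ unitMeasure :=
    u.memLp_val.mul' (MemLinf.memLp ⟨P.c_meas, P.c_bdd⟩)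
  hcu.mono_exponent le_top

lemma memLp_res (hf : MemL2 f) (w : H1) : MemLp (P.res f w) 2 unitMeasure :=
  have hau : MemLp (fun t => P.a' t * w.dval t) 2 unitMeasure :=
    w.memLp_dval.mul' (MemLinf.memLp ⟨P.a'_meas, P.a'_bdd⟩)
  ((hf.memLp.add hau).sub (P.memLp_b_mul_dval w)).sub (P.memLp_c_mul_val w)

lemma intervalIntegrable_B (u v : H1) : IntervalIntegrable (fun t =>
    P.a t * u.dval t * v.dval t + P.b t * u.dval t * v.val t + P.c t * u.val t * v.val t)
    volume 0 1 := by
  have hau : MemLp (fun t => P.a t * u.dval t) 2 unitMeasure :=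
    u.memLp_dval.mul' (memLp_top_of_continuousOn_uIcc P.isPrimitiveOn_a.continuousOn)
  exact ((intervalIntegrable_iff_integrable_unitMeasure.2 (hau.integrable_mul v.memLp_dval)).add
    (H1.intervalIntegrable_mul_val (P.memLp_b_mul_dval u) v)).add
    (H1.intervalIntegrable_mul_val (P.memLp_c_mul_val u) v)

lemma B_sub_left (u w v : H1) : P.B (u - w) v = P.B u v - P.B w v := by
  simp only [B, H1.sub_val, H1.sub_dval]
  rw [← intervalIntegral.integral_sub (P.intervalIntegrable_B u v) (P.intervalIntegrable_B w v)]
  exact intervalIntegral.integral_congr fun t _ => by ring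

lemma B_sub_right (u v w : H1) : P.B u (v - w) = P.B u v - P.B u w := by
  simp only [B, H1.sub_val, H1.sub_dval]
  rw [← intervalIntegral.integral_sub (P.intervalIntegrable_B u v) (P.intervalIntegrable_B u w)]
  exact intervalIntegral.integral_congr fun t _ => by ring

lemma intervalIntegrable_energySq (v : H1) : IntervalIntegrable
    (fun t => P.a t * v.dval t ^ 2 + (P.c t - P.b' t / 2) * v.val t ^ 2) volume 0 1 :=
  have hc : IntervalIntegrable P.c volume 0 1 := intervalIntegrable_iff_integrable_unitMeasure.2
    ((MemLinf.memLp ⟨P.c_meas, P.c_bdd⟩).integrable le_top)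
  (v.dval_sq_int.continuousOn_mul P.isPrimitiveOn_a.continuousOn).add
    ((hc.sub (P.b'_int.div_const 2)).mul_continuousOn (v.isPrimitiveOn.continuousOn.pow 2))

lemma B_self_eq_energySq {v : H1} (h0 : v.val 0 = 0) (h1 : v.val 1 = 0) :
    P.B v v = P.energySq v := by
  have hbvv := P.isPrimitiveOn_b.mul (v.isPrimitiveOn.mul v.isPrimitiveOn)
  have hzero := hbvv.integral_eq_sub
  simp only [h0, h1, mul_zero, sub_zero] at hzero
  have half_derivative : P.B v v - P.energySq v = 1 / 2 * ∫ t in (0 : ℝ)..1,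
      (P.b' t * (v.val t * v.val t) + P.b t * (v.dval t * v.val t + v.val t * v.dval t)) := by
    rw [B, energySq, ← intervalIntegral.integral_sub (P.intervalIntegrable_B v v)
      (P.intervalIntegrable_energySq v), ← intervalIntegral.integral_const_mul]
    exact intervalIntegral.integral_congr fun t _ => by ring
  rwa [hzero, mul_zero, sub_eq_zero] at half_derivative

lemma a0_mul_integral_dval_sq_le_energySq (v : H1) :
    P.a0 * ∫ t in (0 : ℝ)..1, v.dval t ^ 2 ≤ P.energySq v := by
  rw [energySq, ← intervalIntegral.integral_const_mul]
  refine intervalIntegral.integral_mono_ae_restrict zero_le_one (v.dval_sq_int.const_mul _)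
    (P.intervalIntegrable_energySq v) ?_
  rw [← Measure.restrict_congr_set Ioo_ae_eq_Icc]
  filter_upwards [P.cb_nonneg, ae_restrict_mem measurableSet_Ioo] with t hcb ht
  calc P.a0 * v.dval t ^ 2 ≤ P.a t * v.dval t ^ 2 := by
        gcongr
        exact P.a_lb t (Set.Ioo_subset_Icc_self ht)
    _ ≤ P.a t * v.dval t ^ 2 + (P.c t - P.b' t / 2) * v.val t ^ 2 :=
        le_add_of_nonneg_right (mul_nonneg hcb (sq_nonneg _))

lemma ip_sub_B_eq_integral_res_mul (hf : MemL2 f) {N : ℕ} (m : Mesh N) {w v : H1}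
    (hw : m.IsPL w) (hv : ∀ i ≤ N, v.val (m.x i) = 0) :
    ip f v - P.B w v = ∫ t in (0 : ℝ)..1, P.res f w t * v.val t := by
  have hfv := H1.intervalIntegrable_mul_val hf.memLp v
  have hrv := H1.intervalIntegrable_mul_val (P.memLp_res hf w) v
  have hdiff := hfv.sub (P.intervalIntegrable_B w v)
  rw [ip, B, ← intervalIntegral.integral_sub hfv (P.intervalIntegrable_B w v),
    ← m.sum_integral hdiff, ← m.sum_integral hrv]
  refine Finset.sum_congr rfl fun i hi => ?_
  rw [Finset.mem_range] at hi
  have hsub := m.uIcc_x_subset hi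
  obtain ⟨s, hs⟩ := hw i hi
  have hav := ((P.isPrimitiveOn_a.mul v.isPrimitiveOn).mono hsub).integral_eq_sub
  rw [hv i hi.le, hv (i + 1) hi, mul_zero, mul_zero, sub_zero] at hav
  rw [← sub_eq_zero, ← intervalIntegral.integral_sub (hdiff.mono_set hsub) (hrv.mono_set hsub),
    ← mul_zero (-s), ← hav, ← intervalIntegral.integral_const_mul]
  refine intervalIntegral.integral_congr_Ioo_of_le (m.x_mono i hi).le fun t ht => ?_
  simp only [res, hs t ht]
  ring

section Error

variable {P} {u uh : H1} {N : ℕ} {m : Mesh N}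

lemma galerkin_orthogonality (hu : P.IsWeakSolution f u) (huh : P.IsFESolution f m uh) {v : H1}
    (h0 : v.val 0 = 0) (h1 : v.val 1 = 0) (hv : m.IsPL v) : P.B (u - uh) v = 0 := by
  rw [P.B_sub_left, hu.2.2 v h0 h1, huh.2.2.2 v h0 h1 hv, sub_self]

lemma B_error_eq_integral_res_mul (hf : MemL2 f) (hu : P.IsWeakSolution f u)
    (huh : P.IsFESolution f m uh) :
    P.B (u - uh) (u - uh) = ∫ t in (0 : ℝ)..1,
      P.res f uh t * ((u - uh) - m.interp (u - uh).val).val t := by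
  set e := u - uh with he
  have he0 : e.val 0 = 0 := by rw [he, H1.sub_val, hu.1, huh.1, sub_zero]
  have he1 : e.val 1 = 0 := by rw [he, H1.sub_val, hu.2.1, huh.2.1, sub_zero]
  set w := e - m.interp e.val with hw
  have hw0 : w.val 0 = 0 := by rw [hw, H1.sub_val, m.interp_val_zero, sub_self]
  have hw1 : w.val 1 = 0 := by rw [hw, H1.sub_val, m.interp_val_one, sub_self]
  have hwx (i : ℕ) (hi : i ≤ N) : w.val (m.x i) = 0 := by
    rw [hw, H1.sub_val, m.interp_val_x _ hi, sub_self]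
  have horth : P.B e (m.interp e.val) = 0 := galerkin_orthogonality hu huh
    (by rw [m.interp_val_zero, he0]) (by rw [m.interp_val_one, he1]) (m.isPL_interp _)
  calc P.B e e = P.B e w := by
        rw [hw, P.B_sub_right e e (m.interp e.val), horth, sub_zero]
    _ = ip f w - P.B uh w := by rw [he, P.B_sub_left, hu.2.2 w hw0 hw1]
    _ = ∫ t in (0 : ℝ)..1, P.res f uh t * w.val t :=
        P.ip_sub_B_eq_integral_res_mul hf m huh.2.2.1 hwx

lemma a0_sq_mul_integral_error_sq_le (hf : MemL2 f) (hu : P.IsWeakSolution f u)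
    (huh : P.IsFESolution f m uh) :
    P.a0 ^ 2 * ∫ t in (0 : ℝ)..1, (u.dval t - uh.dval t) ^ 2 ≤
      ∑ i ∈ Finset.range N, m.h i ^ 3 * m.avg (P.res f uh) i ^ 2 := by
  set e := u - uh with he
  set E := ∫ t in (0 : ℝ)..1, e.dval t ^ 2
  have he0 : e.val 0 = 0 := by rw [he, H1.sub_val, hu.1, huh.1, sub_zero]
  have he1 : e.val 1 = 0 := by rw [he, H1.sub_val, hu.2.1, huh.2.1, sub_zero]
  have hcoercive : P.a0 * E ≤ P.B e e :=
    P.B_self_eq_energySq he0 he1 ▸ P.a0_mul_integral_dval_sq_le_energySq e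
  have hupper := m.two_mul_integral_mul_sub_interp_le e (P.memLp_res hf uh) P.a0_pos
  rw [← B_error_eq_integral_res_mul hf hu huh] at hupper
  have hlower := mul_le_mul_of_nonneg_left hcoercive (mul_pos two_pos P.a0_pos).le
  change P.a0 ^ 2 * E ≤ _
  linarith

lemma L2_error_le (hf : MemL2 f) (hu : P.IsWeakSolution f u) (huh : P.IsFESolution f m uh)
    (hm : m.IsEquidistributing (P.res f uh)) :
    L2 (fun t => u.dval t - uh.dval t) ≤
      √8 / P.a0 * √(m.alpha (P.res f uh)) / N := by
  have ha0 := P.a0_pos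
  have hbound := (a0_sq_mul_integral_error_sq_le hf hu huh).trans hm.sum_h_pow_three_mul_avg_sq_le
  refine Real.sqrt_le_iff.2 ⟨by positivity, ?_⟩
  calc ∫ t in (0 : ℝ)..1, (u.dval t - uh.dval t) ^ 2
      ≤ 8 * m.alpha (P.res f uh) / (N : ℝ) ^ 2 / P.a0 ^ 2 :=
        (le_div_iff₀' (by positivity)).2 hbound
    _ = (√8 / P.a0 * √(m.alpha (P.res f uh)) / N) ^ 2 := by
        rw [div_pow, mul_pow, div_pow, Real.sq_sqrt (by norm_num),
          Real.sq_sqrt (m.alpha_nonneg _)]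
        ring

end Error

end Coeffs

/-- convergence for equidistributing meshes (Theorem 2.1, error bound). -/
theorem statement0 (P : Coeffs) :
    ∃ C : ℝ, 0 < C ∧
      ∀ f : ℝ → ℝ, MemL2 f →
      ∀ u : H1, P.IsWeakSolution f u →
      ∀ (N : ℕ) (m : Mesh N) (uh : H1), P.IsFESolution f m uh →
        m.IsEquidistributing (P.res f uh) →
        L2 (fun t => u.dval t - uh.dval t) ≤
          C * Real.sqrt (m.alpha (P.res f uh)) / (N:ℝ) := by
  have ha0 := P.a0_pos
  exact ⟨√8 / P.a0, by positivity, fun f hf u hu N m uh huh hm =>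
    Coeffs.L2_error_le hf hu huh hm⟩

end EquidMesh
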